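/- Let g : ℝ/ℤ → ℝ be a bounded Borel function, N ≥ 1 an integer, and β ∈ ℝ. Then ( det( I + β·T_N(g) ) )² ≤ (1+β²)^N · Σ_{J ⊆ {1,…,N}} ( det T_J(g) )², i.e. ( det T_N(1+βg) )² ≤ (1+β²)^N · Σ_N^{(2)}(g). -/

import Mathlib

/-!
Expanding `det (1 + D A)`, with `D` diagonal, multilinearly in its rows gives the sum over subsets
`J` of `∏ i ∈ J, D i i` times the principal minor of `A` on `J`. When `D` is real, taking real parts
keeps these weights, so by Cauchy–Schwarz over the subsets the squared real part of `det (1 + D A)`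
is at most the sum of the squared real parts of the minors times `∑ J, ∏ i ∈ J, (D i i) ^ 2`, which
factors as `∏ i, (1 + (D i i) ^ 2)`. The Toeplitz inequality is the case `D = β I`.
-/

open MeasureTheory Matrix

/-- The `n`-th Fourier coefficient of a function on the circle `ℝ/ℤ`. -/
noncomputable def fhat (g : AddCircle (1:ℝ) → ℝ) (n : ℤ) : ℂ :=
  fourierCoeff (fun t => (g t : ℂ)) n

/-- The `N×N` Toeplitz matrix `T_N(g) = (ĝ(i-j))_{1 ≤ i,j ≤ N}`. -/
noncomputable def Tmat (g : AddCircle (1:ℝ) → ℝ) (N : ℕ) : Matrix (Fin N) (Fin N) ℂ :=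
  Matrix.of fun i j => fhat g (((i : ℕ) : ℤ) - ((j : ℕ) : ℤ))

/-- The submatrix `T_J(g) = (ĝ(i-j))_{i,j ∈ J}` of `T_N(g)`. -/
noncomputable def Tsub (g : AddCircle (1:ℝ) → ℝ) {N : ℕ} (J : Finset (Fin N)) :
    Matrix J J ℂ :=
  Matrix.of fun i j => fhat g ((((i : Fin N) : ℕ) : ℤ) - (((j : Fin N) : ℕ) : ℤ))

section PrincipalMinors

variable {n R 𝕜 : Type*} [Fintype n] [DecidableEq n] [CommRing R] [RCLike 𝕜]

theorem det_one_add_eq_sum_det_submatrix (A : Matrix n n R) :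
    (1 + A).det = ∑ J : Finset n, (A.submatrix (↑) (↑) : Matrix J J R).det := by
  rw [add_comm]
  exact (detRowAlternating.map_add_univ A.row (1 : Matrix n n R).row).trans
    (Finset.sum_congr rfl fun J _ => det_piecewise_one_eq_submatrix_det A J)

theorem det_submatrix_diagonal_mul (d : n → R) (A : Matrix n n R) (J : Finset n) :
    ((diagonal d * A).submatrix (↑) (↑) : Matrix J J R).det =
      (∏ i ∈ J, d i) * (A.submatrix (↑) (↑) : Matrix J J R).det := by
  rw [← Finset.prod_coe_sort J d, ← det_mul_column]
  congr 1
  ext i j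
  simp [diagonal_mul]

theorem det_one_add_diagonal_mul (d : n → R) (A : Matrix n n R) :
    (1 + diagonal d * A).det =
      ∑ J : Finset n, (∏ i ∈ J, d i) * (A.submatrix (↑) (↑) : Matrix J J R).det := by
  simp only [det_one_add_eq_sum_det_submatrix, det_submatrix_diagonal_mul]

theorem re_det_one_add_diagonal_mul (d : n → ℝ) (A : Matrix n n 𝕜) :
    RCLike.re (1 + diagonal (fun i => (d i : 𝕜)) * A).det =
      ∑ J : Finset n, (∏ i ∈ J, d i) * RCLike.re (A.submatrix (↑) (↑) : Matrix J J 𝕜).det := by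
  simp only [det_one_add_diagonal_mul, map_sum, ← RCLike.ofReal_prod, RCLike.re_ofReal_mul]

theorem det_one_add_smul_sq_le_general (d : n → ℝ) (A : Matrix n n 𝕜) :
    RCLike.re (1 + diagonal (fun i => (d i : 𝕜)) * A).det ^ 2 ≤
      (∏ i, (1 + d i ^ 2)) *
        ∑ J : Finset n, RCLike.re (A.submatrix (↑) (↑) : Matrix J J 𝕜).det ^ 2 := by
  have sum_weights : ∑ J : Finset n, (∏ i ∈ J, d i) ^ 2 = ∏ i, (1 + d i ^ 2) := by
    simp only [Finset.prod_one_add, Finset.powerset_univ, Finset.prod_pow]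
  rw [re_det_one_add_diagonal_mul, ← sum_weights]
  exact Finset.sum_mul_sq_le_sq_mul_sq _ _ _

end PrincipalMinors

theorem Tsub_eq_submatrix (g : AddCircle (1 : ℝ) → ℝ) {N : ℕ} (J : Finset (Fin N)) :
    Tsub g J = (Tmat g N).submatrix (↑) (↑) :=
  rfl

/-- `det(I + β·T_N(g))² ≤ (1+β²)^N · Σ_{J ⊆ [N]} det(T_J(g))²`
(all determinants are real since `g` is real-valued). -/
theorem det_one_add_smul_sq_le
    (g : AddCircle (1:ℝ) → ℝ) (hmeas : Measurable g) (C : ℝ) (hbd : ∀ t, |g t| ≤ C)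
    (N : ℕ) (hN : 1 ≤ N) (β : ℝ) :
    (((1 + (β : ℂ) • Tmat g N).det).re) ^ 2 ≤
      (1 + β ^ 2) ^ N * ∑ J : Finset (Fin N), (((Tsub g J).det).re) ^ 2 := by
  simpa [smul_eq_diagonal_mul, Tsub_eq_submatrix] using
    det_one_add_smul_sq_le_general (fun _ => β) (Tmat g N)
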